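/- arXiv:1903.03747 — 2 statements merged into one kernel-verified Lean document; each statement's English description precedes it below -/
import Mathlib

section
/- Weight-5 triple sum formula: 2 T(1,1,3) + 2 T(1,2,2) + T(2,1,2) = (2/3) T(2) T(3). -/
/-- The multiple T-value `T(k₁, …, k_r)`:
`2^r` times the sum over `0 < m₁ < ⋯ < m_r` with `m_i ≡ i (mod 2)`
of `1 / (m₁^{k₁} ⋯ m_r^{k_r})`. -/
noncomputable def MTV (k : List ℕ) : ℝ :=
  2 ^ k.length *
    ∑' f : {f : Fin k.length → ℕ // StrictMono f ∧ ∀ i, f i % 2 = ((i : ℕ) + 1) % 2},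
      ∏ i : Fin k.length, (1 : ℝ) / (f.1 i : ℝ) ^ k.get i

open scoped ENNReal
open intervalIntegral

noncomputable def iv (n : ℕ) : ℝ≥0∞ := (n : ℝ≥0∞)⁻¹
noncomputable def oo (n : ℕ) : ℝ≥0∞ := if n % 2 = 1 then 1 else 0
noncomputable def ee (n : ℕ) : ℝ≥0∞ := if n % 2 = 0 ∧ n ≠ 0 then 1 else 0

lemma oo_zero : oo 0 = 0 := by simp [oo]
lemma ee_zero : ee 0 = 0 := by simp [ee]

lemma iv_eq (n : ℕ) (hn : n ≠ 0) : iv n = ENNReal.ofReal ((n : ℝ)⁻¹) := by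
  unfold iv
  rw [ENNReal.ofReal_inv_of_pos (by positivity), ENNReal.ofReal_natCast]

lemma iv_ne_top (n : ℕ) (hn : n ≠ 0) : iv n ≠ ⊤ := by
  simp [iv, hn]

lemma iv_pf (x y : ℕ) (hx : x ≠ 0) (hy : y ≠ 0) :
    iv x * iv y = iv y * iv (x + y) + iv x * iv (x + y) := by
  rw [iv_eq x hx, iv_eq y hy, iv_eq (x+y) (by omega)]
  rw [← ENNReal.ofReal_mul (by positivity), ← ENNReal.ofReal_mul (by positivity),
    ← ENNReal.ofReal_mul (by positivity), ← ENNReal.ofReal_add (by positivity) (by positivity)]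
  congr 1
  push_cast
  field_simp

/-- basic double sum -/
noncomputable def QQ (u v : ℕ → ℝ≥0∞) (i j k : ℕ) : ℝ≥0∞ :=
  ∑' x : ℕ, ∑' y : ℕ, u x * v y * (iv x ^ i * iv y ^ j * iv (x + y) ^ k)

noncomputable def LL (u : ℕ → ℝ≥0∞) (i : ℕ) : ℝ≥0∞ := ∑' x : ℕ, u x * iv x ^ i

lemma QQ_pf (u v : ℕ → ℝ≥0∞) (hu : u 0 = 0) (hv : v 0 = 0) (i j k : ℕ) :
    QQ u v (i+1) (j+1) k = QQ u v i (j+1) (k+1) + QQ u v (i+1) j (k+1) := by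
  unfold QQ
  rw [← ENNReal.tsum_add]
  refine tsum_congr fun x => ?_
  rw [← ENNReal.tsum_add]
  refine tsum_congr fun y => ?_
  by_cases hx : x = 0
  · subst hx; simp [hu]
  by_cases hy : y = 0
  · subst hy; simp [hv]
  have := iv_pf x y hx hy
  calc _ = u x * v y * (iv x ^ i * iv y ^ j * iv (x + y) ^ k) * (iv x * iv y) := by ring
    _ = _ := by rw [this]; ring

lemma QQ_symm (u v : ℕ → ℝ≥0∞) (i j k : ℕ) : QQ u v i j k = QQ v u j i k := by
  unfold QQ
  rw [ENNReal.tsum_comm]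
  refine tsum_congr fun x => tsum_congr fun y => ?_
  rw [add_comm x y]; ring

lemma QQ_prod (u v : ℕ → ℝ≥0∞) (i j : ℕ) : QQ u v i j 0 = LL u i * LL v j := by
  unfold QQ LL
  rw [← ENNReal.tsum_mul_right]
  refine tsum_congr fun x => ?_
  rw [← ENNReal.tsum_mul_left]
  refine tsum_congr fun y => ?_
  ring

lemma tsum_gt (F : ℕ → ℝ≥0∞) (x : ℕ) :
    ∑' y, (if x < y then F y else 0) = ∑' d, (if d = 0 then 0 else F (x + d)) := by
  have h := Summable.sum_add_tsum_nat_add' (f := fun y => if x < y then F y else 0) (k := x) ENNReal.summable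
  rw [← h, Finset.sum_eq_zero, zero_add]
  · refine tsum_congr fun d => ?_
    rcases Nat.eq_zero_or_pos d with h | h
    · simp [h]
    · have : d ≠ 0 := by omega
      simp [this, add_comm, h]
  · intro y hy
    simp at hy
    simp; omega

lemma tsum_split (F : ℕ → ℕ → ℝ≥0∞) :
    ∑' x, ∑' y, F x y = (∑' x, ∑' d, (if d = 0 then 0 else F x (x + d)))
      + (∑' x, ∑' d, (if d = 0 then 0 else F (x + d) x)) + ∑' x, F x x := by
  have h1 : ∀ x y, F x y = (if x < y then F x y else 0) + (if y < x then F x y else 0)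
      + (if y = x then F x y else 0) := by
    intro x y
    rcases lt_trichotomy x y with h | h | h
    · simp [h, h.ne', not_lt_of_gt h]
    · simp [h]
    · simp [h, h.ne, not_lt_of_gt h]
  have h2 : ∑' x, ∑' y, F x y = ∑' x, ∑' y, ((if x < y then F x y else 0) +
      (if y < x then F x y else 0) + (if y = x then F x y else 0)) :=
    tsum_congr fun x => tsum_congr fun y => h1 x y
  rw [h2]
  simp_rw [ENNReal.tsum_add]
  congr 1
  · congr 1
    · exact tsum_congr fun x => tsum_gt _ x
    · rw [ENNReal.tsum_comm]
      exact tsum_congr fun x => tsum_gt (fun y => F y x) x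
  · exact tsum_congr fun x => by simp

lemma stuffle_oe (i j : ℕ) : LL oo i * LL ee j = QQ oo oo i 0 j + QQ ee oo j 0 i := by
  rw [← QQ_prod]
  unfold QQ
  rw [tsum_split]
  have : ∑' x, oo x * ee x * (iv x ^ i * iv x ^ j * iv (x + x) ^ 0) = 0 := by
    rw [ENNReal.tsum_eq_zero]
    intro x
    by_cases h : x % 2 = 1
    · have : ¬ (x % 2 = 0) := by omega
      simp [ee, this]
    · simp [oo, h]
  rw [this, add_zero]
  congr 1 <;> refine tsum_congr fun x => tsum_congr fun d => ?_
  · by_cases hd : d = 0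
    · simp [hd, oo_zero]
    simp only [hd, if_false]
    by_cases h : x % 2 = 1
    · by_cases h' : d % 2 = 1
      · have h3 : (x + d) % 2 = 0 := by omega
        simp [oo, ee, h, h', h3, hd]
      · have h3 : ¬ (x + d) % 2 = 0 := by omega
        have h4 : d % 2 = 0 := by omega
        simp [oo, ee, h', h3]
    · simp [oo, h]
  · by_cases hd : d = 0
    · simp [hd, oo_zero]
    simp only [hd, if_false]
    by_cases h : x % 2 = 0 ∧ x ≠ 0
    · by_cases h' : d % 2 = 1
      · have h3 : (x + d) % 2 = 1 := by omega
        simp [oo, ee, h, h', h3, mul_comm]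
      · have h3 : ¬ (x + d) % 2 = 1 := by omega
        simp only [oo, h', h3]; simp
    · simp [ee, h]

lemma stuffle_oo (i j : ℕ) :
    LL oo i * LL oo j = QQ oo ee i 0 j + QQ oo ee j 0 i + LL oo (i + j) := by
  rw [← QQ_prod]
  unfold QQ
  rw [tsum_split]
  have : ∑' x, oo x * oo x * (iv x ^ i * iv x ^ j * iv (x + x) ^ 0) = LL oo (i + j) := by
    unfold LL
    refine tsum_congr fun x => ?_
    by_cases h : x % 2 = 1
    · simp [oo, h, pow_add]
    · simp [oo, h]
  rw [this]
  congr 1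
  congr 1 <;> refine tsum_congr fun x => tsum_congr fun d => ?_
  all_goals
    by_cases hd : d = 0
    · simp [hd, ee_zero]
    simp only [hd, if_false]
    by_cases h : x % 2 = 1
    · by_cases h' : d % 2 = 1
      · have h3 : ¬ (x + d) % 2 = 1 := by omega
        have h4 : ¬ d % 2 = 0 := by omega
        simp only [oo, ee, h3, h4]; simp
      · have h3 : (x + d) % 2 = 1 := by omega
        have h4 : d % 2 = 0 := by omega
        simp [oo, ee, h, h4, h3, hd, mul_comm]
    · simp [oo, h]

lemma harm_hasSum (n : ℕ) :
    HasSum (fun m : ℕ => ((m : ℝ) + 1)⁻¹ - ((m : ℝ) + 1 + n)⁻¹) (∑ k ∈ Finset.range n, ((k : ℝ) + 1)⁻¹) := by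
  induction n with
  | zero => simp
  | succ n ih =>
    rw [Finset.sum_range_succ]
    have h2 : HasSum (fun m : ℕ => ((m : ℝ) + 1 + n)⁻¹ - ((m : ℝ) + 1 + (n + 1 : ℕ))⁻¹) (((n : ℝ) + 1)⁻¹) := by
      rw [hasSum_iff_tendsto_nat_of_nonneg]
      · have h3 : ∀ N : ℕ, ∑ m ∈ Finset.range N, (((m : ℝ) + 1 + n)⁻¹ - ((m : ℝ) + 1 + (n + 1 : ℕ))⁻¹)
            = ((n : ℝ) + 1)⁻¹ - (((N + (n + 1) : ℕ) : ℝ))⁻¹ := by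
          intro N
          induction N with
          | zero => simp
          | succ N ihN =>
            rw [Finset.sum_range_succ, ihN]
            push_cast
            ring_nf
        simp_rw [h3]
        have := (tendsto_inv_atTop_nhds_zero_nat (𝕜 := ℝ)).comp (Filter.tendsto_add_atTop_nat (n+1))
        simpa using this.const_sub (((n : ℝ) + 1)⁻¹)
      · intro m
        rw [sub_nonneg]
        apply inv_anti₀ (by positivity)
        push_cast; linarith
    convert ih.add h2 using 2
    ring

lemma harm (n : ℕ) (hn : n ≠ 0) :
    ∑' m, (if m = 0 then 0 else iv m * iv (m + n)) = iv n * ∑' k, (if k ≠ 0 ∧ k ≤ n then iv k else 0) := by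
  have h1 : ∑' k, (if k ≠ 0 ∧ k ≤ n then iv k else 0) = ENNReal.ofReal (∑ k ∈ Finset.range n, ((k : ℝ) + 1)⁻¹) := by
    rw [ENNReal.ofReal_sum_of_nonneg (fun _ _ => by positivity)]
    rw [tsum_eq_zero_add' ENNReal.summable]
    simp only [ne_eq, not_true_eq_false, false_and, if_false, zero_add]
    rw [tsum_eq_sum (s := Finset.range n)]
    · refine Finset.sum_congr rfl fun k hk => ?_
      have : k + 1 ≤ n := by simpa using hk
      rw [if_pos ⟨by omega, this⟩, iv_eq _ (by omega)]
      push_cast; rfl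
    · intro k hk
      simp at hk
      rw [if_neg]; omega
  rw [h1, iv_eq n hn, ← ENNReal.ofReal_mul (by positivity)]
  have h2 := (harm_hasSum n).mul_left ((n : ℝ)⁻¹)
  rw [← h2.tsum_eq, tsum_eq_zero_add' ENNReal.summable]
  have hn' : (0:ℝ) < n := by positivity
  have h3 : ∀ m : ℕ, (n : ℝ)⁻¹ * (((m : ℝ) + 1)⁻¹ - ((m : ℝ) + 1 + n)⁻¹) = ((m:ℝ)+1)⁻¹ * ((m : ℝ) + 1 + n)⁻¹ := by
    intro m
    field_simp
    ring
  simp_rw [h3] at h2 ⊢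
  rw [ENNReal.ofReal_tsum_of_nonneg (fun m => by positivity) h2.summable]
  simp only [if_true, zero_add]
  refine tsum_congr fun m => ?_
  rw [if_neg (by omega), iv_eq _ (by omega), iv_eq _ (by omega), ← ENNReal.ofReal_mul (by positivity)]
  push_cast; rfl

lemma relC : QQ ee oo 1 0 4 + QQ oo ee 1 0 4 + LL oo 5 = QQ oo oo 3 1 1 + QQ oo ee 3 1 1 := by
  have h1 : QQ oo oo 3 1 1 + QQ oo ee 3 1 1 =
      ∑' n, oo n * iv n ^ 3 * ∑' m, (if m = 0 then 0 else iv m * iv (m + n)) := by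
    unfold QQ
    rw [← ENNReal.tsum_add]
    refine tsum_congr fun n => ?_
    rw [← ENNReal.tsum_add, ← ENNReal.tsum_mul_left]
    refine tsum_congr fun m => ?_
    by_cases hm : m = 0
    · simp [hm, oo_zero, ee_zero]
    have : oo m + ee m = 1 := by
      by_cases h : m % 2 = 1
      · simp [oo, ee, h]
      · have : m % 2 = 0 := by omega
        simp [oo, ee, this, hm]
    rw [if_neg hm, ← mul_one (oo n * iv n ^ 3), ← this, add_comm m n]
    ring
  have h2 : ∀ n, oo n * iv n ^ 3 * ∑' m, (if m = 0 then 0 else iv m * iv (m + n)) =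
      ∑' k, if k ≠ 0 ∧ k ≤ n then oo n * iv n ^ 4 * iv k else 0 := by
    intro n
    by_cases hn : n = 0
    · subst hn; simp [oo_zero]
    rw [harm n hn, ← mul_assoc, ← ENNReal.tsum_mul_left]
    refine tsum_congr fun k => ?_
    split_ifs
    · ring
    · simp
  rw [h1]
  simp_rw [h2]
  rw [ENNReal.tsum_comm, tsum_split]
  have h3 : ∑' (x : ℕ) (d : ℕ), (if d = 0 then 0 else
      if x + d ≠ 0 ∧ x + d ≤ x then oo x * iv x ^ 4 * iv (x + d) else 0) = 0 := by
    simp only [ENNReal.tsum_eq_zero]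
    intro x d
    split_ifs <;> first | rfl | omega
  rw [h3, add_zero]
  congr 1
  · unfold QQ
    rw [← ENNReal.tsum_add]
    refine tsum_congr fun x => ?_
    rw [← ENNReal.tsum_add]
    refine tsum_congr fun d => ?_
    by_cases hd : d = 0
    · simp [hd, ee_zero, oo_zero]
    by_cases hx : x = 0
    · simp [hx, ee_zero, oo_zero]
    have : oo (x + d) = ee x * oo d + oo x * ee d := by
      rcases Nat.mod_two_eq_zero_or_one x with h | h <;>
      rcases Nat.mod_two_eq_zero_or_one d with h' | h' <;>
      simp [oo, ee, h, h', hx, hd, Nat.add_mod]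
    simp only [hd, hx, ne_eq, not_false_eq_true, true_and, le_add_iff_nonneg_right, zero_le, if_true, if_false, this]
    ring
  · unfold LL
    refine tsum_congr fun x => ?_
    by_cases hx : x = 0
    · simp [hx, oo_zero]
    simp [hx]; ring

noncomputable def ss (t : ℝ) : ℝ := (1 - t) / (1 + t)
/-- B(m+1,n) -/
noncomputable def BB (m n : ℕ) : ℝ := ∫ t in (0:ℝ)..1, t ^ m * ss t ^ n
/-- D(m,n+1) -/
noncomputable def DD (m n : ℕ) : ℝ := ∫ t in (0:ℝ)..1, t ^ m * ss t ^ n * (2 / (1 + t) ^ 2)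

lemma ss_cont : ContinuousOn ss (Set.uIcc 0 1) := by
  unfold ss
  rw [Set.uIcc_of_le zero_le_one]
  refine ContinuousOn.div (by fun_prop) (by fun_prop) ?_
  intro t ht; have := ht.1; positivity

lemma B_int (m n : ℕ) : IntervalIntegrable (fun t : ℝ => t ^ m * ss t ^ n) MeasureTheory.volume 0 1 := by
  apply ContinuousOn.intervalIntegrable
  have := ss_cont
  fun_prop

lemma D_int (m n : ℕ) :
    IntervalIntegrable (fun t : ℝ => t ^ m * ss t ^ n * (2 / (1 + t) ^ 2)) MeasureTheory.volume 0 1 := by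
  apply ContinuousOn.intervalIntegrable
  have := ss_cont
  refine ContinuousOn.mul (by fun_prop) (ContinuousOn.div (by fun_prop) (by fun_prop) ?_)
  rw [Set.uIcc_of_le zero_le_one]
  intro t ht; have := ht.1; positivity

lemma ss_nonneg {t : ℝ} (h : t ∈ Set.Icc (0:ℝ) 1) : 0 ≤ ss t :=
  div_nonneg (by linarith [h.2]) (by linarith [h.1])

lemma ss_le {t : ℝ} (h : t ∈ Set.Icc (0:ℝ) 1) : ss t ≤ 1 - t := by
  unfold ss
  exact div_le_self (by linarith [h.2]) (by linarith [h.1])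

lemma BB_nonneg (m n : ℕ) : 0 ≤ BB m n := by
  refine integral_nonneg zero_le_one fun t ht => ?_
  have := ss_nonneg ht; have := ht.1; positivity

lemma DD_nonneg (m n : ℕ) : 0 ≤ DD m n := by
  refine integral_nonneg zero_le_one fun t ht => ?_
  have := ss_nonneg ht; have := ht.1; positivity

lemma BB_rec (m n : ℕ) : BB m n = BB m (n + 2) + 2 * DD (m + 1) n := by
  unfold BB DD
  rw [← integral_const_mul, ← integral_add (B_int _ _) ((D_int _ _).const_mul 2)]
  refine integral_congr fun t ht => ?_
  rw [Set.uIcc_of_le zero_le_one] at ht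
  have : (1 + t) ≠ 0 := by have := ht.1; positivity
  have h2 : ss t ^ 2 + 4 * t / (1 + t) ^ 2 = 1 := by unfold ss; field_simp; ring
  calc t ^ m * ss t ^ n = t ^ m * ss t ^ n * (ss t ^ 2 + 4 * t / (1 + t) ^ 2) := by rw [h2]; ring
    _ = _ := by ring

lemma DD_rec (m n : ℕ) : DD m n = DD (m + 2) n + 2 * BB m (n + 1) := by
  unfold BB DD
  rw [← integral_const_mul, ← integral_add (D_int _ _) ((B_int _ _).const_mul 2)]
  refine integral_congr fun t ht => ?_
  rw [Set.uIcc_of_le zero_le_one] at ht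
  have : (1 + t) ≠ 0 := by have := ht.1; positivity
  simp only [pow_succ (ss t)]
  have h2 : (2 / (1 + t) ^ 2) = t ^ 2 * (2 / (1 + t) ^ 2) + 2 * ss t := by unfold ss; field_simp; ring
  calc t ^ m * ss t ^ n * (2 / (1 + t) ^ 2) = t ^ m * ss t ^ n * (t ^ 2 * (2 / (1 + t) ^ 2) + 2 * ss t) := by rw [← h2]
    _ = _ := by ring

lemma BB_le (m n : ℕ) : BB m n ≤ 1 / (n + 1) := by
  have : ∫ t in (0:ℝ)..1, (1 - t) ^ n = 1 / (n + 1) := by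
    rw [integral_comp_sub_left (fun t : ℝ => t ^ n) 1]; simp
  rw [← this]
  refine integral_mono_on zero_le_one (B_int _ _) (Continuous.intervalIntegrable (by fun_prop) _ _) fun t ht => ?_
  have h1 := ss_nonneg ht
  have h2 := ss_le ht
  calc t ^ m * ss t ^ n ≤ 1 * ss t ^ n := by
        gcongr; exact pow_le_one₀ ht.1 ht.2
    _ ≤ _ := by rw [one_mul]; gcongr

lemma DD_le (m n : ℕ) : DD m n ≤ 2 * (1 / (m + 1)) := by
  have : ∫ t in (0:ℝ)..1, 2 * t ^ m = 2 * (1 / (m + 1)) := by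
    rw [integral_const_mul]; simp
  rw [← this]
  refine integral_mono_on zero_le_one (D_int _ _) (Continuous.intervalIntegrable (by fun_prop) _ _) fun t ht => ?_
  have h1 := ss_nonneg ht
  have h2 := ss_le ht
  have h0 := ht.1
  have h3 : ss t ^ n ≤ 1 := pow_le_one₀ h1 (by linarith)
  have h4 : 2 / (1 + t) ^ 2 ≤ 2 := div_le_self (by norm_num) (by nlinarith)
  calc t ^ m * ss t ^ n * (2 / (1 + t) ^ 2) ≤ t ^ m * 1 * 2 := by gcongr
    _ = _ := by ring

lemma ss_deriv {t : ℝ} (h : 1 + t ≠ 0) : HasDerivAt ss (-(2 / (1 + t) ^ 2)) t := by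
  unfold ss
  have := ((hasDerivAt_id t).const_sub 1).div ((hasDerivAt_id t).const_add 1) h
  refine this.congr_deriv ?_
  simp only [id]; field_simp; ring

/-- integration by parts -/
lemma parts (m n : ℕ) : (m + 1) * BB m (n + 1) = (n + 1) * DD (m + 1) n := by
  have h : ∫ t in (0:ℝ)..1, (((m + 1 : ℝ) * (t ^ m * ss t ^ (n + 1))) - (n + 1 : ℝ) * (t ^ (m + 1) * ss t ^ n * (2 / (1 + t) ^ 2)))
      = 1 ^ (m+1) * ss 1 ^ (n + 1) - 0 ^ (m + 1) * ss 0 ^ (n+1) := by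
    refine integral_eq_sub_of_hasDerivAt (f := fun t => t ^ (m + 1) * ss t ^ (n+1)) (fun t ht => ?_) (((B_int _ _).const_mul _).sub ((D_int _ _).const_mul _))
    rw [Set.uIcc_of_le zero_le_one] at ht
    have : (1 + t) ≠ 0 := by have := ht.1; positivity
    have := (hasDerivAt_pow (m+1) t).mul ((ss_deriv this).pow (n+1))
    refine this.congr_deriv ?_
    push_cast; simp only [Pi.pow_apply]; ring
  rw [integral_sub ((B_int _ _).const_mul _) ((D_int _ _).const_mul _), integral_const_mul, integral_const_mul] at h
  have : ss 1 = 0 := by simp [ss]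
  simp [this] at h
  unfold BB DD
  linarith

lemma BB_zero (m : ℕ) : (m + 1) * BB m 0 = 1 := by
  unfold BB
  simp; field_simp

lemma DD_zero (n : ℕ) : (n + 1) * DD 0 n = 1 := by
  have h : ∫ t in (0:ℝ)..1, (- ((n + 1 : ℝ) * (t ^ 0 * ss t ^ n * (2 / (1 + t) ^ 2))))
      = ss 1 ^ (n + 1) - ss 0 ^ (n+1) := by
    refine integral_eq_sub_of_hasDerivAt (f := fun t => ss t ^ (n+1)) (fun t ht => ?_) (((D_int 0 _).const_mul _).neg)
    rw [Set.uIcc_of_le zero_le_one] at ht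
    have : (1 + t) ≠ 0 := by have := ht.1; positivity
    have := ((ss_deriv this).pow (n+1))
    refine this.congr_deriv ?_
    push_cast; ring
  rw [integral_neg, integral_const_mul] at h
  have h1 : ss 1 = 0 := by simp [ss]
  have h0 : ss 0 = 1 := by simp [ss]
  simp only [h1, h0] at h
  unfold DD
  simp at h ⊢
  linarith

lemma BB_hasSum (m n : ℕ) : HasSum (fun k : ℕ => 2 * DD (m + 1) (n + 2 * k)) (BB m n) := by
  rw [hasSum_iff_tendsto_nat_of_nonneg (fun k => mul_nonneg zero_le_two (DD_nonneg _ _))]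
  have h : ∀ N : ℕ, ∑ k ∈ Finset.range N, 2 * DD (m + 1) (n + 2 * k) = BB m n - BB m (n + 2 * N) := by
    intro N
    induction N with
    | zero => simp
    | succ N ih => rw [Finset.sum_range_succ, ih, BB_rec m (n + 2 * N)]; ring_nf
  simp_rw [h]
  have h2 : Filter.Tendsto (fun N : ℕ => BB m (n + 2 * N)) Filter.atTop (nhds 0) := by
    refine squeeze_zero (fun N => BB_nonneg _ _) (fun N => (BB_le _ _).trans ?_) (tendsto_one_div_add_atTop_nhds_zero_nat (𝕜 := ℝ))
    push_cast
    apply one_div_le_one_div_of_le (by positivity)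
    have : (0:ℝ) ≤ n := by positivity
    have : (0:ℝ) ≤ N := by positivity
    linarith
  simpa using h2.const_sub (BB m n)

lemma DD_hasSum (m n : ℕ) : HasSum (fun k : ℕ => 2 * BB (m + 2 * k) (n + 1)) (DD m n) := by
  rw [hasSum_iff_tendsto_nat_of_nonneg (fun k => mul_nonneg zero_le_two (BB_nonneg _ _))]
  have h : ∀ N : ℕ, ∑ k ∈ Finset.range N, 2 * BB (m + 2 * k) (n + 1) = DD m n - DD (m + 2 * N) n := by
    intro N
    induction N with
    | zero => simp
    | succ N ih => rw [Finset.sum_range_succ, ih, DD_rec (m + 2 * N) n]; ring_nf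
  simp_rw [h]
  have h2 : Filter.Tendsto (fun N : ℕ => DD (m + 2 * N) n) Filter.atTop (nhds 0) := by
    have h3 := (tendsto_one_div_add_atTop_nhds_zero_nat (𝕜 := ℝ)).const_mul 2
    rw [mul_zero] at h3
    refine squeeze_zero (fun N => DD_nonneg _ _) (fun N => (DD_le _ _).trans ?_) h3
    push_cast
    gcongr
    have : (0:ℝ) ≤ m := by positivity
    have : (0:ℝ) ≤ N := by positivity
    linarith
  simpa using h2.const_sub (DD m n)

/-- the connector -/
noncomputable def CC (m n : ℕ) : ℝ := if m = 0 then 1 else m * BB (m - 1) n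

lemma CC_nonneg (m n : ℕ) : 0 ≤ CC m n := by
  unfold CC; split_ifs
  · exact zero_le_one
  · exact mul_nonneg (by positivity) (BB_nonneg _ _)

lemma CC_B (m n : ℕ) : CC (m + 1) n = (m + 1) * BB m n := by simp [CC]

lemma CC_D (m n : ℕ) : CC m (n + 1) = (n + 1) * DD m n := by
  rcases m with _ | m
  · rw [DD_zero]; simp [CC]
  · rw [CC_B, parts]

lemma CC_zero_right (m : ℕ) : CC m 0 = 1 := by
  rcases m with _ | m
  · simp [CC]
  · rw [CC_B, BB_zero]

lemma CC_zero_left (n : ℕ) : CC 0 n = 1 := by simp [CC]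

noncomputable def cc (m n : ℕ) : ℝ≥0∞ := ENNReal.ofReal (CC m n)

lemma tsum_par (F : ℕ → ℝ≥0∞) (x : ℕ) :
    ∑' y, (if x < y ∧ (x + y) % 2 = 1 then F y else 0) = ∑' k, F (x + 1 + 2 * k) := by
  have hinj : Function.Injective (fun k : ℕ => x + 1 + 2 * k) := by
    intro a b h; simp at h; omega
  rw [← hinj.tsum_eq]
  · refine tsum_congr fun k => ?_
    rw [if_pos]; omega
  · intro y hy
    simp only [Function.mem_support, ne_eq, ite_eq_right_iff, not_forall] at hy
    obtain ⟨h, -⟩ := hy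
    exact ⟨(y - x - 1) / 2, by simp only; omega⟩

lemma iv_mul_ofReal (n : ℕ) (r : ℝ) :
    iv (n + 1) * ENNReal.ofReal ((n + 1) * r) = ENNReal.ofReal r := by
  rw [iv_eq _ (by omega), ← ENNReal.ofReal_mul (by positivity)]
  congr 1
  push_cast
  field_simp

lemma cc_left (m n : ℕ) (hn : n ≠ 0) :
    ∑' k, (if m < k ∧ (m + k) % 2 = 1 then 2 * iv k * cc k n else 0) = iv n * cc m n := by
  obtain ⟨n, rfl⟩ := Nat.exists_eq_succ_of_ne_zero hn
  rw [tsum_par (fun k => 2 * iv k * cc k (n + 1))]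
  unfold cc
  rw [Nat.succ_eq_add_one, CC_D, iv_mul_ofReal, ← (DD_hasSum m n).tsum_eq,
    ENNReal.ofReal_tsum_of_nonneg (fun k => mul_nonneg zero_le_two (BB_nonneg _ _)) (DD_hasSum m n).summable]
  refine tsum_congr fun k => ?_
  rw [show m + 1 + 2 * k = (m + 2 * k) + 1 by ring, CC_B, mul_assoc, iv_mul_ofReal,
    ENNReal.ofReal_mul zero_le_two, ENNReal.ofReal_ofNat]

lemma cc_right (m n : ℕ) (hm : m ≠ 0) :
    ∑' k, (if n < k ∧ (n + k) % 2 = 1 then 2 * iv k * cc m k else 0) = iv m * cc m n := by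
  obtain ⟨m, rfl⟩ := Nat.exists_eq_succ_of_ne_zero hm
  rw [tsum_par (fun k => 2 * iv k * cc (m + 1) k)]
  unfold cc
  rw [Nat.succ_eq_add_one, CC_B, iv_mul_ofReal, ← (BB_hasSum m n).tsum_eq,
    ENNReal.ofReal_tsum_of_nonneg (fun k => mul_nonneg zero_le_two (DD_nonneg _ _)) (BB_hasSum m n).summable]
  refine tsum_congr fun k => ?_
  rw [show n + 1 + 2 * k = (n + 2 * k) + 1 by ring, CC_D, mul_assoc, iv_mul_ofReal,
    ENNReal.ofReal_mul zero_le_two, ENNReal.ofReal_ofNat]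

noncomputable def X0 (f : ℕ → ℝ≥0∞) (m : ℕ) : ℝ≥0∞ := iv m * f m
noncomputable def X1 (f : ℕ → ℝ≥0∞) (m : ℕ) : ℝ≥0∞ :=
  ∑' k, if k < m ∧ (k + m) % 2 = 1 then 2 * iv m * f k else 0
noncomputable def PP (f g : ℕ → ℝ≥0∞) : ℝ≥0∞ := ∑' m, ∑' n, f m * g n * cc m n
noncomputable def dl (n : ℕ) : ℝ≥0∞ := if n = 0 then 1 else 0

lemma X1_zero (f : ℕ → ℝ≥0∞) : X1 f 0 = 0 := by simp [X1]
lemma X0_zero (f : ℕ → ℝ≥0∞) (h : f 0 = 0) : X0 f 0 = 0 := by simp [X0, h]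

lemma PP_left (f g : ℕ → ℝ≥0∞) (hg : g 0 = 0) : PP (X1 f) g = PP f (X0 g) := by
  have h1 : PP f (X0 g) = ∑' k, ∑' n, ∑' m,
      (if k < m ∧ (k + m) % 2 = 1 then 2 * iv m * f k * g n * cc m n else 0) := by
    unfold PP X0
    refine tsum_congr fun k => tsum_congr fun n => ?_
    by_cases hn : n = 0
    · simp [hn, hg]
    calc f k * (iv n * g n) * cc k n = f k * g n * (iv n * cc k n) := by ring
      _ = _ := by
        rw [← cc_left k n hn, ← ENNReal.tsum_mul_left]
        refine tsum_congr fun m => ?_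
        split_ifs
        · ring
        · simp
  rw [h1]
  unfold PP X1
  have h2 : ∀ k, ∑' n, ∑' m, (if k < m ∧ (k + m) % 2 = 1 then 2 * iv m * f k * g n * cc m n else 0)
      = ∑' m, ∑' n, (if k < m ∧ (k + m) % 2 = 1 then 2 * iv m * f k * g n * cc m n else 0) :=
    fun k => ENNReal.tsum_comm
  simp_rw [h2]
  symm
  rw [ENNReal.tsum_comm]
  refine tsum_congr fun m => ?_
  rw [ENNReal.tsum_comm]
  refine tsum_congr fun n => ?_
  rw [← ENNReal.tsum_mul_right, ← ENNReal.tsum_mul_right]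
  refine tsum_congr fun k => ?_
  split_ifs
  · ring
  · simp

lemma PP_right (f g : ℕ → ℝ≥0∞) (hf : f 0 = 0) : PP (X0 f) g = PP f (X1 g) := by
  have h1 : PP (X0 f) g = ∑' m, ∑' k, ∑' n,
      (if k < n ∧ (k + n) % 2 = 1 then 2 * iv n * f m * g k * cc m n else 0) := by
    unfold PP X0
    refine tsum_congr fun m => tsum_congr fun n => ?_
    by_cases hm : m = 0
    · simp [hm, hf]
    calc (iv m * f m) * g n * cc m n = f m * g n * (iv m * cc m n) := by ring
      _ = _ := by
        rw [← cc_right m n hm, ← ENNReal.tsum_mul_left]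
        refine tsum_congr fun k => ?_
        split_ifs
        · ring
        · simp
  rw [h1]
  unfold PP X1
  refine tsum_congr fun m => ?_
  rw [ENNReal.tsum_comm]
  refine tsum_congr fun n => ?_
  rw [← ENNReal.tsum_mul_left, ← ENNReal.tsum_mul_right]
  refine tsum_congr fun k => ?_
  split_ifs
  · ring
  · simp

lemma PP_dl_right (f : ℕ → ℝ≥0∞) : PP f dl = ∑' m, f m := by
  unfold PP
  refine tsum_congr fun m => ?_
  rw [tsum_eq_single 0]
  · simp [dl, cc, CC_zero_right]
  · intro n hn; simp [dl, hn]

lemma PP_dl_left (f : ℕ → ℝ≥0∞) : PP dl f = ∑' m, f m := by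
  unfold PP
  rw [tsum_eq_single 0]
  · simp [dl, cc, CC_zero_left]
  · intro n hn; simp [dl, hn]

lemma dual113 : ∑' m, X0 (X0 (X1 (X1 (X1 dl)))) m = ∑' m, X0 (X0 (X0 (X1 (X1 dl)))) m := by
  rw [← PP_dl_right, ← PP_dl_left, PP_right, PP_right, PP_left, PP_left, PP_left] <;>
    simp [X0_zero, X1_zero]

lemma dual122 : ∑' m, X0 (X1 (X0 (X1 (X1 dl)))) m = ∑' m, X0 (X0 (X1 (X0 (X1 dl)))) m := by
  rw [← PP_dl_right, ← PP_dl_left, PP_right, PP_left, PP_right, PP_left, PP_left] <;>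
    simp [X0_zero, X1_zero]

lemma dual212 : ∑' m, X0 (X1 (X1 (X0 (X1 dl)))) m = ∑' m, X0 (X1 (X0 (X0 (X1 dl)))) m := by
  rw [← PP_dl_right, ← PP_dl_left, PP_right, PP_left, PP_left, PP_right, PP_left] <;>
    simp [X0_zero, X1_zero]

lemma X1_dl (m : ℕ) : X1 dl m = 2 * oo m * iv m := by
  unfold X1
  rw [tsum_eq_single 0]
  · rcases Nat.mod_two_eq_zero_or_one m with h | h
    · simp [oo, h]
    · have : 0 < m := by omega
      simp [oo, h, dl, this]
  · intro n hn; simp [dl, hn]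

lemma dbl (f : ℕ → ℝ≥0∞) (b c : ℕ) (hf : ∀ m, f m = 2 * oo m * iv m ^ b) :
    ∑' m, iv m ^ c * X1 f m = 4 * QQ oo oo b 0 (c + 1) := by
  unfold X1 QQ
  simp_rw [← ENNReal.tsum_mul_left]
  rw [ENNReal.tsum_comm]
  refine tsum_congr fun k => ?_
  have := tsum_gt (fun m => if (k + m) % 2 = 1 then iv m ^ c * (2 * iv m * f k) else 0) k
  trans ∑' y, if k < y then (if (k + y) % 2 = 1 then iv y ^ c * (2 * iv y * f k) else 0) else 0
  · refine tsum_congr fun m => ?_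
    by_cases h1 : k < m <;> by_cases h2 : (k + m) % 2 = 1 <;> simp [h1, h2]
  rw [this]
  refine tsum_congr fun d => ?_
  by_cases hd : d % 2 = 1
  · have h1 : (k + (k + d)) % 2 = 1 := by omega
    have h2 : d ≠ 0 := by omega
    rw [if_neg h2, if_pos h1, hf]
    simp [oo, hd]
    ring
  · have h1 : ¬ (k + (k + d)) % 2 = 1 := by omega
    rw [if_neg h1]; simp [oo, hd]

lemma d14 : ∑' m, X0 (X0 (X0 (X1 (X1 dl)))) m = 4 * QQ oo oo 1 0 4 := by
  rw [← dbl (X1 dl) 1 3 (fun m => by rw [X1_dl, pow_one])]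
  exact tsum_congr fun m => by simp only [X0]; ring
lemma d23 : ∑' m, X0 (X0 (X1 (X0 (X1 dl)))) m = 4 * QQ oo oo 2 0 3 := by
  rw [← dbl (X0 (X1 dl)) 2 2 (fun m => by rw [X0, X1_dl]; ring)]
  exact tsum_congr fun m => by simp only [X0]; ring
lemma d32 : ∑' m, X0 (X1 (X0 (X0 (X1 dl)))) m = 4 * QQ oo oo 3 0 2 := by
  rw [← dbl (X0 (X0 (X1 dl))) 3 1 (fun m => by rw [X0, X0, X1_dl]; ring)]
  exact tsum_congr fun m => by simp only [X0]; ring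

/-- triple sum -/
noncomputable def TT (p q r : ℕ) : ℝ≥0∞ := ∑' m, iv m ^ r * ∑' k, (if k < m ∧ (k + m) % 2 = 1 then
    iv k ^ q * ∑' l, (if l < k ∧ (l + k) % 2 = 1 then oo l * iv l ^ p else 0) else 0)

lemma trip (p q r : ℕ) (f g : ℕ → ℝ≥0∞) (hf : ∀ m, f m = 2 * oo m * iv m ^ p)
    (hg : ∀ m, g m = iv m ^ q * X1 f m) :
    ∑' m, iv m ^ r * X1 g m = 8 * TT p (q + 1) (r + 1) := by
  unfold TT
  rw [← ENNReal.tsum_mul_left]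
  refine tsum_congr fun m => ?_
  unfold X1
  rw [← ENNReal.tsum_mul_left, ← ENNReal.tsum_mul_left, ← ENNReal.tsum_mul_left]
  refine tsum_congr fun k => ?_
  split_ifs with h
  · rw [hg]
    unfold X1
    simp_rw [← ENNReal.tsum_mul_left]
    refine tsum_congr fun l => ?_
    split_ifs with h2
    · rw [hf]; ring
    · simp
  · simp

lemma t113 : ∑' m, X0 (X0 (X1 (X1 (X1 dl)))) m = 8 * TT 1 1 3 := by
  rw [← trip 1 0 2 (X1 dl) (X1 (X1 dl)) (fun m => by rw [X1_dl, pow_one]) (fun m => by simp)]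
  exact tsum_congr fun m => by simp only [X0]; ring
lemma t122 : ∑' m, X0 (X1 (X0 (X1 (X1 dl)))) m = 8 * TT 1 2 2 := by
  rw [← trip 1 1 1 (X1 dl) (X0 (X1 (X1 dl))) (fun m => by rw [X1_dl, pow_one]) (fun m => by simp [X0])]
  exact tsum_congr fun m => by simp only [X0]; ring
lemma t212 : ∑' m, X0 (X1 (X1 (X0 (X1 dl)))) m = 8 * TT 2 1 2 := by
  rw [← trip 2 0 1 (X0 (X1 dl)) (X1 (X0 (X1 dl))) (fun m => by rw [X0, X1_dl]; ring) (fun m => by simp)]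
  exact tsum_congr fun m => by simp only [X0]; ring

lemma exp230 (u v : ℕ → ℝ≥0∞) (hu : u 0 = 0) (hv : v 0 = 0) : QQ u v 2 3 0 =
    QQ v u 3 0 2 + 2 * QQ v u 2 0 3 + 3 * QQ v u 1 0 4 + 3 * QQ u v 1 0 4 + QQ u v 2 0 3 := by
  have h := QQ_pf u v hu hv
  rw [h 1 2 0, h 0 2 1, h 1 1 1, h 0 1 2, h 1 0 2, h 0 0 3,
    QQ_symm v u 3 0 2, QQ_symm v u 2 0 3, QQ_symm v u 1 0 4]
  ring

lemma exp311 (u v : ℕ → ℝ≥0∞) (hu : u 0 = 0) (hv : v 0 = 0) : QQ u v 3 1 1 =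
    QQ v u 1 0 4 + QQ u v 1 0 4 + QQ u v 2 0 3 + QQ u v 3 0 2 := by
  have h := QQ_pf u v hu hv
  rw [h 2 0 1, h 1 0 2, h 0 0 3, QQ_symm v u 1 0 4]

lemma LL_ne_top (u : ℕ → ℝ≥0∞) (hu : u 0 = 0) (hu1 : ∀ n, u n ≤ 1) (i : ℕ) (hi : 2 ≤ i) :
    LL u i ≠ ⊤ := by
  have hs : Summable (fun n : ℕ => ((n : ℝ) ^ i)⁻¹) := Real.summable_nat_pow_inv.2 (by omega)
  refine ne_top_of_le_ne_top hs.tsum_ofReal_ne_top ?_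
  unfold LL
  refine ENNReal.tsum_le_tsum fun n => ?_
  by_cases hn : n = 0
  · simp [hn, hu]
  calc u n * iv n ^ i ≤ 1 * iv n ^ i := by gcongr; exact hu1 n
    _ = _ := by rw [one_mul, iv_eq n hn, ← ENNReal.ofReal_pow (by positivity), inv_pow]

lemma oo_le (n : ℕ) : oo n ≤ 1 := by unfold oo; split_ifs <;> simp
lemma ee_le (n : ℕ) : ee n ≤ 1 := by unfold ee; split_ifs <;> simp

lemma iv_two_mul (k : ℕ) : 4 * iv (2 * k) ^ 2 = iv k ^ 2 := by
  by_cases hk : k = 0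
  · simp [hk, iv]
  rw [iv_eq k hk, iv_eq (2 * k) (by omega), ← ENNReal.ofReal_pow (by positivity),
    ← ENNReal.ofReal_pow (by positivity), ← ENNReal.ofReal_ofNat, ← ENNReal.ofReal_mul (by positivity)]
  congr 1
  push_cast; field_simp; norm_num

lemma E2 : 4 * LL ee 2 = LL oo 2 + LL ee 2 := by
  unfold LL
  rw [← ENNReal.tsum_add, ← ENNReal.tsum_mul_left]
  have hinj : Function.Injective (fun k : ℕ => 2 * k) := by
    intro a b h; simp at h; omega
  rw [← hinj.tsum_eq]
  · refine tsum_congr fun k => ?_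
    by_cases hk : k = 0
    · simp [hk, ee_zero, oo_zero]
    have h1 : ee (2 * k) = 1 := by simp [ee, hk]
    have h2 : oo k + ee k = 1 := by
      rcases Nat.mod_two_eq_zero_or_one k with h | h <;> simp [oo, ee, h, hk]
    rw [h1, one_mul, iv_two_mul, ← add_mul, h2, one_mul]
  · intro y hy
    by_contra hc
    apply hy
    have : ¬ (y % 2 = 0) := fun h => hc ⟨y / 2, by simp only; omega⟩
    simp [ee, this]

lemma MTV1 (p : ℕ) : MTV [p] = 2 * (LL oo p).toReal := by
  unfold MTV
  have : LL oo p = ∑' f : {f : Fin 1 → ℕ // StrictMono f ∧ ∀ i, f i % 2 = ((i : ℕ) + 1) % 2},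
      iv (f.1 0) ^ p := by
    have := tsum_subtype {f : Fin 1 → ℕ | StrictMono f ∧ ∀ i, f i % 2 = ((i : ℕ) + 1) % 2}
      (fun f => iv (f 0) ^ p)
    refine Eq.trans ?_ this.symm
    rw [← (Equiv.funUnique (Fin 1) ℕ).symm.tsum_eq]
    unfold LL
    refine tsum_congr fun x => ?_
    have hs : StrictMono ((Equiv.funUnique (Fin 1) ℕ).symm x) := Subsingleton.strictMono _
    by_cases h : x % 2 = 1
    · rw [Set.indicator_of_mem]
      · simp [oo, h]
      · refine ⟨hs, fun i => ?_⟩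
        fin_cases i; simpa using h
    · rw [Set.indicator_of_notMem]
      · simp [oo, h]
      · intro hc
        have := hc.2 0
        simp at this
        exact h this
  rw [this, ENNReal.tsum_toReal_eq]
  · simp [iv]
  · intro f
    have := f.2.2 0
    exact ENNReal.pow_ne_top (iv_ne_top _ (by simp at this; omega))

def e3 : (Fin 3 → ℕ) ≃ ℕ × ℕ × ℕ where
  toFun f := (f 2, f 1, f 0)
  invFun p := ![p.2.2, p.2.1, p.1]
  left_inv f := by ext i; fin_cases i <;> rfl
  right_inv p := rfl

lemma e3_symm (m k l : ℕ) : e3.symm (m, k, l) = ![l, k, m] := rfl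

lemma MTV3 (p q r : ℕ) : MTV [p, q, r] = 8 * (TT p q r).toReal := by
  unfold MTV
  have : TT p q r = ∑' f : {f : Fin 3 → ℕ // StrictMono f ∧ ∀ i, f i % 2 = ((i : ℕ) + 1) % 2},
      iv (f.1 0) ^ p * iv (f.1 1) ^ q * iv (f.1 2) ^ r := by
    have := tsum_subtype {f : Fin 3 → ℕ | StrictMono f ∧ ∀ i, f i % 2 = ((i : ℕ) + 1) % 2}
      (fun f => iv (f 0) ^ p * iv (f 1) ^ q * iv (f 2) ^ r)
    refine Eq.trans ?_ this.symm
    rw [← e3.symm.tsum_eq, ENNReal.tsum_prod']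
    unfold TT
    refine tsum_congr fun m => ?_
    rw [ENNReal.tsum_prod', ← ENNReal.tsum_mul_left]
    refine tsum_congr fun k => ?_
    have key : ∀ l, (e3.symm (m, k, l) ∈ {f : Fin 3 → ℕ | StrictMono f ∧ ∀ i, f i % 2 = ((i : ℕ) + 1) % 2})
        ↔ (l < k ∧ k < m) ∧ l % 2 = 1 ∧ k % 2 = 0 ∧ m % 2 = 1 := by
      intro l
      simp only [Set.mem_ofPred_eq, e3_symm, Fin.strictMono_iff_lt_succ, Fin.forall_fin_succ]
      simp
    by_cases h1 : k < m ∧ (k + m) % 2 = 1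
    · rw [if_pos h1, ← ENNReal.tsum_mul_left, ← ENNReal.tsum_mul_left]
      refine tsum_congr fun l => ?_
      by_cases h2 : l < k ∧ (l + k) % 2 = 1
      · by_cases h3 : l % 2 = 1
        · rw [if_pos h2, Set.indicator_of_mem ((key l).2 (by omega))]
          simp [oo, h3, e3_symm]
          ring
        · rw [Set.indicator_of_notMem (fun h => by rw [key] at h; omega)]
          simp [oo, h3]
      · rw [if_neg h2, Set.indicator_of_notMem (fun h => by rw [key] at h; omega)]
        simp
    · rw [if_neg h1, mul_zero]
      symm
      rw [ENNReal.tsum_eq_zero]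
      intro l
      rw [Set.indicator_of_notMem (fun h => by rw [key] at h; omega)]
  rw [this, ENNReal.tsum_toReal_eq]
  · have : (8 : ℝ) = 2 ^ 3 := by norm_num
    rw [this]
    refine congrArg _ (tsum_congr fun f => ?_)
    erw [Fin.prod_univ_three]
    simp [iv]
  · intro f
    have h0 := f.2.2 0
    have h1 : f.1 0 < f.1 1 := f.2.1 (by decide)
    have h2 : f.1 1 < f.1 2 := f.2.1 (by decide)
    exact ENNReal.mul_ne_top (ENNReal.mul_ne_top (ENNReal.pow_ne_top (iv_ne_top _ (by simp at h0; omega)))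
      (ENNReal.pow_ne_top (iv_ne_top _ (by omega)))) (ENNReal.pow_ne_top (iv_ne_top _ (by omega)))

/-- **Example (weight-5 triple sum formula).**
`2 T(1,1,3) + 2 T(1,2,2) + T(2,1,2) = (2/3) T(2) T(3)`. -/
theorem MTV_weight5_sum :
    2 * MTV [1, 1, 3] + 2 * MTV [1, 2, 2] + MTV [2, 1, 2]
      = 2 / 3 * MTV [2] * MTV [3] := by
  have e1 := t113.symm.trans (dual113.trans d14)
  have e2 := t122.symm.trans (dual122.trans d23)
  have e3 := t212.symm.trans (dual212.trans d32)
  rw [MTV3, MTV3, MTV3, MTV1, MTV1]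
  have fo2 : LL oo 2 ≠ ⊤ := LL_ne_top oo oo_zero oo_le 2 (by norm_num)
  have fo3 : LL oo 3 ≠ ⊤ := LL_ne_top oo oo_zero oo_le 3 (by norm_num)
  have fo5 : LL oo 5 ≠ ⊤ := LL_ne_top oo oo_zero oo_le 5 (by norm_num)
  have fe2 : LL ee 2 ≠ ⊤ := LL_ne_top ee ee_zero ee_le 2 (by norm_num)
  have fe3 : LL ee 3 ≠ ⊤ := LL_ne_top ee ee_zero ee_le 3 (by norm_num)
  have rA := (QQ_prod oo oo 2 3).symm.trans (exp230 oo oo oo_zero oo_zero)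
  have r23 := (QQ_prod oo ee 2 3).symm.trans (exp230 oo ee oo_zero ee_zero)
  have r32 := (QQ_prod ee oo 2 3).symm.trans (exp230 ee oo ee_zero oo_zero)
  have s32 := stuffle_oe 3 2
  have s23 := stuffle_oe 2 3
  have soo := stuffle_oo 2 3
  have rC := relC
  rw [exp311 oo oo oo_zero oo_zero, exp311 oo ee oo_zero ee_zero] at rC
  have r4 := E2
  have gA := rA ▸ ENNReal.mul_ne_top fo2 fo3
  have g23 := r23 ▸ ENNReal.mul_ne_top fo2 fe3
  have g32 := r32 ▸ ENNReal.mul_ne_top fe2 fo3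
  simp only [ne_eq, ENNReal.add_eq_top, ENNReal.mul_eq_top, not_or] at gA g23 g32
  have fS14 : QQ oo oo 1 0 4 ≠ ⊤ := by simpa using gA.1.2
  have fS23 : QQ oo oo 2 0 3 ≠ ⊤ := gA.2
  have fS32 : QQ oo oo 3 0 2 ≠ ⊤ := gA.1.1.1.1
  have fV14 : QQ oo ee 1 0 4 ≠ ⊤ := by simpa using g23.1.2
  have fV23 : QQ oo ee 2 0 3 ≠ ⊤ := g23.2
  have fU32 : QQ ee oo 3 0 2 ≠ ⊤ := g23.1.1.1.1
  have fU14 : QQ ee oo 1 0 4 ≠ ⊤ := by simpa using g32.1.2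
  have fU23 : QQ ee oo 2 0 3 ≠ ⊤ := g32.2
  have fV32 : QQ oo ee 3 0 2 ≠ ⊤ := g32.1.1.1.1
  clear gA g23 g32
  generalize QQ oo oo 1 0 4 = S14 at *
  generalize QQ oo oo 2 0 3 = S23 at *
  generalize QQ oo oo 3 0 2 = S32 at *
  generalize QQ oo ee 1 0 4 = V14 at *
  generalize QQ oo ee 2 0 3 = V23 at *
  generalize QQ oo ee 3 0 2 = V32 at *
  generalize QQ ee oo 1 0 4 = U14 at *
  generalize QQ ee oo 2 0 3 = U23 at *
  generalize QQ ee oo 3 0 2 = U32 at *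
  norm_num at soo
  generalize LL oo 2 = O2 at *
  generalize LL oo 3 = O3 at *
  generalize LL oo 5 = O5 at *
  generalize LL ee 2 = E2 at *
  generalize LL ee 3 = E3 at *
  lift S14 to NNReal using fS14
  lift S23 to NNReal using fS23
  lift S32 to NNReal using fS32
  lift V14 to NNReal using fV14
  lift V23 to NNReal using fV23
  lift V32 to NNReal using fV32
  lift U14 to NNReal using fU14
  lift U23 to NNReal using fU23
  lift U32 to NNReal using fU32
  lift O2 to NNReal using fo2
  lift O3 to NNReal using fo3
  lift O5 to NNReal using fo5
  lift E2 to NNReal using fe2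
  lift E3 to NNReal using fe3
  have e1' := congrArg ENNReal.toReal e1
  have e2' := congrArg ENNReal.toReal e2
  have e3' := congrArg ENNReal.toReal e3
  simp only [ENNReal.toReal_mul, ENNReal.toReal_ofNat, ENNReal.coe_toReal] at e1' e2' e3' ⊢
  rw [e1', e2', e3']
  norm_cast at rA r23 r32 s32 s23 soo rC r4
  have rA := congrArg NNReal.toReal rA
  have r23 := congrArg NNReal.toReal r23
  have r32 := congrArg NNReal.toReal r32
  have s32 := congrArg NNReal.toReal s32
  have s23 := congrArg NNReal.toReal s23
  have soo := congrArg NNReal.toReal soo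
  have rC := congrArg NNReal.toReal rC
  have r4 := congrArg NNReal.toReal r4
  push_cast at rA r23 r32 s32 s23 soo rC r4
  have h : (O2 : ℝ) = 3 * E2 := by linarith
  rw [h] at *
  linarith
end

section
/- For every positive integer q, ∑_{d≥1, l≥0, m≥0} 1/((2l+1)(2m+1)(2d+2l+1)^q (2d+2m+1)) = (3/8) · T(1, 1, q+1). -/
noncomputable def oddH (n : ℕ) : ℝ := ∑ j ∈ Finset.range n, 1 / (2 * (j : ℝ) + 1)

lemma oddH_nonneg (n : ℕ) : 0 ≤ oddH n := Finset.sum_nonneg fun _ _ => by positivity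

lemma oddH_succ (n : ℕ) : oddH (n + 1) = oddH n + 1 / (2 * (n : ℝ) + 1) :=
  Finset.sum_range_succ _ _

lemma hasSum_step (D : ℕ) :
    HasSum (fun m : ℕ => 1 / (2 * ((m : ℝ) + D) + 1) - 1 / (2 * ((m : ℝ) + (D + 1)) + 1))
      (1 / (2 * (D : ℝ) + 1)) := by
  rw [hasSum_iff_tendsto_nat_of_nonneg]
  · have h : ∀ n : ℕ, ∑ m ∈ Finset.range n,
        (1 / (2 * ((m : ℝ) + D) + 1) - 1 / (2 * ((m : ℝ) + (D + 1)) + 1))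
        = 1 / (2 * (D : ℝ) + 1) - 1 / (2 * ((n : ℝ) + D) + 1) := by
      intro n
      induction n with
      | zero => simp
      | succ n ih =>
        rw [Finset.sum_range_succ, ih]
        push_cast
        have : (n : ℝ) + 1 + D = n + (D + 1) := by ring
        rw [this]; ring
    simp_rw [h]
    have h0 : Filter.Tendsto (fun n : ℕ => 1 / (2 * ((n : ℝ) + D) + 1)) Filter.atTop (nhds 0) := by
      refine squeeze_zero (fun n => by positivity) (fun n => ?_)
        tendsto_one_div_add_atTop_nhds_zero_nat
      apply one_div_le_one_div_of_le (by positivity)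
      have : (0 : ℝ) ≤ n := by positivity
      have : (0 : ℝ) ≤ D := by positivity
      linarith
    simpa using h0.const_sub (1 / (2 * (D : ℝ) + 1))
  · intro m
    rw [sub_nonneg]
    apply one_div_le_one_div_of_le (by positivity)
    linarith

lemma hasSum_diff (D : ℕ) :
    HasSum (fun m : ℕ => 1 / (2 * (m : ℝ) + 1) - 1 / (2 * ((m : ℝ) + D) + 1)) (oddH D) := by
  induction D with
  | zero => simpa [oddH] using (hasSum_zero : HasSum (fun _ : ℕ => (0 : ℝ)) 0)
  | succ D ih =>
    rw [oddH_succ]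
    convert ih.add (hasSum_step D) using 2
    push_cast; ring

lemma hasSum_inner (d : ℕ) :
    HasSum (fun m : ℕ => 1 / ((2 * (m : ℝ) + 1) * (2 * ((d : ℝ) + 1) + 2 * (m : ℝ) + 1)))
      (oddH (d + 1) / (2 * (d + 1))) := by
  have hs := (hasSum_diff (d + 1)).div_const (2 * ((d : ℝ) + 1))
  refine Eq.mp (congrArg (fun f => HasSum f _) (funext fun m => ?_)) hs
  push_cast
  have h1 : 2 * (m : ℝ) + 1 ≠ 0 := by positivity
  have h2 : 2 * ((d : ℝ) + 1) + 2 * (m : ℝ) + 1 ≠ 0 := by positivity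
  have h3 : 2 * ((m : ℝ) + (d + 1)) + 1 ≠ 0 := by positivity
  have h4 : (d : ℝ) + 1 ≠ 0 := by positivity
  field_simp
  ring

lemma conv_one (n : ℕ) :
    ∑ p ∈ Finset.HasAntidiagonal.antidiagonal n, 1 / ((2 * (p.1 : ℝ) + 1) * (2 * (p.2 : ℝ) + 1))
      = 2 * (oddH (n + 1) / (2 * (n + 1))) := by
  have h : ∀ p ∈ Finset.HasAntidiagonal.antidiagonal n, 1 / ((2 * (p.1 : ℝ) + 1) * (2 * (p.2 : ℝ) + 1))
      = (1 / (2 * (p.1 : ℝ) + 1) + 1 / (2 * (p.2 : ℝ) + 1)) / (2 * (n + 1)) := by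
    rintro ⟨a, b⟩ hp
    rw [Finset.HasAntidiagonal.mem_antidiagonal] at hp
    subst hp
    push_cast
    field_simp
    ring
  have e1 : ∑ p ∈ Finset.HasAntidiagonal.antidiagonal n, 1 / (2 * (p.1 : ℝ) + 1) = oddH (n + 1) :=
    Finset.Nat.sum_antidiagonal_eq_sum_range_succ (fun a _ => 1 / (2 * (a : ℝ) + 1)) n
  have e2 : ∑ p ∈ Finset.HasAntidiagonal.antidiagonal n, 1 / (2 * (p.2 : ℝ) + 1) = oddH (n + 1) := by
    rw [← e1, ← Finset.Nat.sum_antidiagonal_swap]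
    rfl
  rw [Finset.sum_congr rfl h, ← Finset.sum_div, Finset.sum_add_distrib, e1, e2]
  ring

lemma conv_two (n : ℕ) :
    ∑ p ∈ Finset.HasAntidiagonal.antidiagonal n, oddH (p.1 + 1) / (2 * (p.2 : ℝ) + 1)
      = 2 * ∑ k ∈ Finset.range (n + 1), oddH (k + 1) / (2 * ((k : ℝ) + 1)) := by
  induction n with
  | zero => simp [oddH]
  | succ n ih =>
    rw [Finset.sum_range_succ, mul_add, ← ih]
    push_cast
    have := conv_one (n + 1)
    push_cast at this
    rw [← this]
    rw [Finset.Nat.sum_antidiagonal_succ, Finset.Nat.sum_antidiagonal_succ]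
    have h : ∀ p ∈ Finset.HasAntidiagonal.antidiagonal n, oddH (p.1 + 1 + 1) / (2 * (p.2 : ℝ) + 1)
      = oddH (p.1 + 1) / (2 * (p.2 : ℝ) + 1)
        + 1 / ((2 * ((p.1 + 1 : ℕ) : ℝ) + 1) * (2 * (p.2 : ℝ) + 1)) := by
      intro p _
      rw [oddH_succ (p.1 + 1)]
      field_simp
    simp only []
    rw [Finset.sum_congr rfl h, Finset.sum_add_distrib]
    simp [oddH]
    ring

lemma conv_three (n : ℕ) :
    ∑ p ∈ Finset.HasAntidiagonal.antidiagonal n, 1 / (2 * (p.2 : ℝ) + 1) * (oddH (p.1 + 1) / (2 * ((p.1 : ℝ) + 1)))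
      = 3 * (1 / (2 * (n : ℝ) + 3) *
        ∑ k ∈ Finset.range (n + 1), oddH (k + 1) / (2 * ((k : ℝ) + 1))) := by
  have h : ∀ p ∈ Finset.HasAntidiagonal.antidiagonal n,
      1 / (2 * (p.2 : ℝ) + 1) * (oddH (p.1 + 1) / (2 * ((p.1 : ℝ) + 1)))
      = 1 / (2 * (n : ℝ) + 3) * (oddH (p.1 + 1) / (2 * (p.2 : ℝ) + 1)
        + oddH (p.1 + 1) / (2 * ((p.1 : ℝ) + 1))) := by
    rintro ⟨a, b⟩ hp
    rw [Finset.HasAntidiagonal.mem_antidiagonal] at hp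
    subst hp
    push_cast
    field_simp
    ring
  have e1 : ∑ p ∈ Finset.HasAntidiagonal.antidiagonal n, oddH (p.1 + 1) / (2 * ((p.1 : ℝ) + 1))
      = ∑ k ∈ Finset.range (n + 1), oddH (k + 1) / (2 * ((k : ℝ) + 1)) :=
    Finset.Nat.sum_antidiagonal_eq_sum_range_succ
      (fun a _ => oddH (a + 1) / (2 * ((a : ℝ) + 1))) n
  rw [Finset.sum_congr rfl h, ← Finset.mul_sum, Finset.sum_add_distrib, e1, conv_two]
  ring

open scoped ENNReal in
lemma tsum_anti (F : ℕ → ℕ → ℝ≥0∞) :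
    ∑' a, ∑' b, F a b = ∑' n, ∑ p ∈ Finset.HasAntidiagonal.antidiagonal n, F p.1 p.2 := by
  rw [← ENNReal.tsum_prod, ← Finset.HasAntidiagonal.sigmaAntidiagonalEquivProd.tsum_eq, ENNReal.tsum_sigma']
  refine tsum_congr fun n => ?_
  rw [tsum_fintype]
  exact Finset.sum_coe_sort (Finset.HasAntidiagonal.antidiagonal n) (fun p => F p.1 p.2)

def idxEquiv : ℕ × ℕ × ℕ ≃
    {f : Fin 3 → ℕ // StrictMono f ∧ ∀ i, f i % 2 = ((i : ℕ) + 1) % 2} where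
  toFun p := ⟨![2 * p.1 + 1, 2 * (p.1 + p.2.1) + 2, 2 * (p.1 + p.2.1 + p.2.2) + 3], by
    constructor
    · rw [Fin.strictMono_iff_lt_succ]
      intro i
      fin_cases i <;> simp <;> omega
    · intro i
      fin_cases i <;> simp <;> omega⟩
  invFun f := (f.1 0 / 2, (f.1 1 - f.1 0) / 2, (f.1 2 - f.1 1) / 2)
  left_inv := by
    rintro ⟨a, b, c⟩
    simp
    omega
  right_inv := by
    rintro ⟨f, hf, hm⟩
    have h01 : f 0 < f 1 := hf (by decide)
    have h12 : f 1 < f 2 := hf (by decide)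
    have m0 := hm 0
    have m1 := hm 1
    have m2 := hm 2
    simp at m0 m1 m2
    apply Subtype.ext
    funext i
    fin_cases i <;> simp <;> omega

lemma MTV_eq (q : ℕ) : MTV [1, 1, q + 1] = 8 * ∑' p : ℕ × ℕ × ℕ,
    1 / (2 * (p.1 : ℝ) + 1) * (1 / (2 * ((p.1 : ℝ) + p.2.1 + 1)))
      * (1 / (2 * ((p.1 : ℝ) + p.2.1 + p.2.2) + 3) ^ (q + 1)) := by
  have h : MTV [1, 1, q + 1] = 2 ^ 3 *
    ∑' f : {f : Fin 3 → ℕ // StrictMono f ∧ ∀ i, f i % 2 = ((i : ℕ) + 1) % 2},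
      ∏ i : Fin 3, (1 : ℝ) / (f.1 i : ℝ) ^ [1, 1, q + 1].get i := rfl
  rw [h, ← idxEquiv.tsum_eq]
  congr 1
  · norm_num
  · refine tsum_congr fun p => ?_
    rw [Fin.prod_univ_three]
    simp only [idxEquiv, Equiv.coe_fn_mk, List.get, Matrix.cons_val]
    push_cast
    simp only [pow_one]
    congr 3
    ring

lemma toReal_tsum {f : ℕ × ℕ × ℕ → ℝ} (hf : ∀ p, 0 ≤ f p) :
    ∑' p, f p = (∑' p, ENNReal.ofReal (f p)).toReal := by
  rw [ENNReal.tsum_toReal_eq (fun _ => ENNReal.ofReal_ne_top)]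
  exact tsum_congr fun p => (ENNReal.toReal_ofReal (hf p)).symm

lemma left_eq (q : ℕ) :
    ∑' p : ℕ × ℕ × ℕ, ENNReal.ofReal (1 / ((2 * (p.2.1 : ℝ) + 1) * (2 * (p.2.2 : ℝ) + 1)
          * (2 * ((p.1 : ℝ) + 1) + 2 * (p.2.1 : ℝ) + 1) ^ q
          * (2 * ((p.1 : ℝ) + 1) + 2 * (p.2.2 : ℝ) + 1)))
    = ∑' n : ℕ, ENNReal.ofReal (3 * (1 / (2 * (n : ℝ) + 3) ^ (q + 1) *
        ∑ k ∈ Finset.range (n + 1), oddH (k + 1) / (2 * ((k : ℝ) + 1)))) := by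
  rw [ENNReal.tsum_prod']
  simp_rw [ENNReal.tsum_prod']
  have h : ∀ d l : ℕ, ∑' m : ℕ, ENNReal.ofReal (1 / ((2 * (l : ℝ) + 1) * (2 * (m : ℝ) + 1)
          * (2 * ((d : ℝ) + 1) + 2 * (l : ℝ) + 1) ^ q
          * (2 * ((d : ℝ) + 1) + 2 * (m : ℝ) + 1)))
      = ENNReal.ofReal (1 / (2 * ((d : ℝ) + 1) + 2 * (l : ℝ) + 1) ^ q *
        (1 / (2 * (l : ℝ) + 1) * (oddH (d + 1) / (2 * ((d : ℝ) + 1))))) := by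
    intro d l
    have hs := ((hasSum_inner d).mul_left (1 / (2 * (l : ℝ) + 1))).mul_left
      (1 / (2 * ((d : ℝ) + 1) + 2 * (l : ℝ) + 1) ^ q)
    rw [← hs.tsum_eq, ENNReal.ofReal_tsum_of_nonneg (fun m => by positivity) hs.summable]
    refine tsum_congr fun m => ?_
    congr 1
    field_simp
  simp_rw [h]
  rw [tsum_anti]
  refine tsum_congr fun n => ?_
  rw [← ENNReal.ofReal_sum_of_nonneg]
  · congr 1
    have e : 3 * (1 / (2 * (n : ℝ) + 3) ^ (q + 1) *
        ∑ k ∈ Finset.range (n + 1), oddH (k + 1) / (2 * ((k : ℝ) + 1)))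
        = 1 / (2 * (n : ℝ) + 3) ^ q * (3 * (1 / (2 * (n : ℝ) + 3) *
        ∑ k ∈ Finset.range (n + 1), oddH (k + 1) / (2 * ((k : ℝ) + 1)))) := by
      rw [pow_succ, ← one_div_mul_one_div]
      ring
    rw [e, ← conv_three, Finset.mul_sum]
    refine Finset.sum_congr rfl ?_
    rintro ⟨a, b⟩ hp
    rw [Finset.HasAntidiagonal.mem_antidiagonal] at hp
    subst hp
    congr 3
    push_cast
    ring
  · intro p _
    have := oddH_nonneg (p.1 + 1)
    positivity

lemma right_eq (q : ℕ) :
    ∑' p : ℕ × ℕ × ℕ, ENNReal.ofReal (1 / (2 * (p.1 : ℝ) + 1) * (1 / (2 * ((p.1 : ℝ) + p.2.1 + 1)))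
      * (1 / (2 * ((p.1 : ℝ) + p.2.1 + p.2.2) + 3) ^ (q + 1)))
    = ∑' n : ℕ, ENNReal.ofReal (1 / (2 * (n : ℝ) + 3) ^ (q + 1) *
        ∑ k ∈ Finset.range (n + 1), oddH (k + 1) / (2 * ((k : ℝ) + 1))) := by
  rw [ENNReal.tsum_prod']
  simp_rw [ENNReal.tsum_prod']
  rw [tsum_anti]
  have h : ∀ k : ℕ, ∑ p ∈ Finset.HasAntidiagonal.antidiagonal k, ∑' c : ℕ,
      ENNReal.ofReal (1 / (2 * (p.1 : ℝ) + 1) * (1 / (2 * ((p.1 : ℝ) + p.2 + 1)))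
      * (1 / (2 * ((p.1 : ℝ) + p.2 + c) + 3) ^ (q + 1)))
      = ∑' c : ℕ, ENNReal.ofReal (1 / (2 * ((k : ℝ) + c) + 3) ^ (q + 1) *
        (oddH (k + 1) / (2 * ((k : ℝ) + 1)))) := by
    intro k
    rw [← Summable.tsum_finsetSum (fun _ _ => ENNReal.summable)]
    refine tsum_congr fun c => ?_
    rw [← ENNReal.ofReal_sum_of_nonneg (fun _ _ => by positivity)]
    congr 1
    have e1 : ∑ p ∈ Finset.HasAntidiagonal.antidiagonal k, 1 / (2 * (p.1 : ℝ) + 1) = oddH (k + 1) :=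
      Finset.Nat.sum_antidiagonal_eq_sum_range_succ (fun a _ => 1 / (2 * (a : ℝ) + 1)) k
    rw [← e1, Finset.sum_div, Finset.mul_sum]
    refine Finset.sum_congr rfl ?_
    rintro ⟨a, b⟩ hp
    rw [Finset.HasAntidiagonal.mem_antidiagonal] at hp
    subst hp
    push_cast
    ring
  simp_rw [h]
  rw [tsum_anti]
  refine tsum_congr fun n => ?_
  rw [← ENNReal.ofReal_sum_of_nonneg]
  · congr 1
    have e1 : ∑ p ∈ Finset.HasAntidiagonal.antidiagonal n, oddH (p.1 + 1) / (2 * ((p.1 : ℝ) + 1))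
        = ∑ k ∈ Finset.range (n + 1), oddH (k + 1) / (2 * ((k : ℝ) + 1)) :=
      Finset.Nat.sum_antidiagonal_eq_sum_range_succ
        (fun a _ => oddH (a + 1) / (2 * ((a : ℝ) + 1))) n
    rw [← e1, Finset.mul_sum]
    refine Finset.sum_congr rfl ?_
    rintro ⟨a, b⟩ hp
    rw [Finset.HasAntidiagonal.mem_antidiagonal] at hp
    subst hp
    push_cast
    rfl
  · intro p _
    have := oddH_nonneg (p.1 + 1)
    positivity

/-- **Lemma.** For every positive integer `q`,
`∑_{d≥1, l≥0, m≥0} 1/((2l+1)(2m+1)(2d+2l+1)^q (2d+2m+1)) = (3/8) T(1,1,q+1)`.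
(Below `p = (p₁, p₂, p₃)` corresponds to `(d, l, m) = (p₁ + 1, p₂, p₃)`.) -/
theorem triple_sum_eq_T11 (q : ℕ) (hq : 1 ≤ q) :
    (∑' p : ℕ × ℕ × ℕ,
        1 / ((2 * (p.2.1 : ℝ) + 1) * (2 * (p.2.2 : ℝ) + 1)
          * (2 * ((p.1 : ℝ) + 1) + 2 * (p.2.1 : ℝ) + 1) ^ q
          * (2 * ((p.1 : ℝ) + 1) + 2 * (p.2.2 : ℝ) + 1)))
      = 3 / 8 * MTV [1, 1, q + 1] := by
  rw [MTV_eq, toReal_tsum (fun p => by positivity), toReal_tsum (fun p => by positivity),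
    left_eq, right_eq]
  simp_rw [ENNReal.ofReal_mul (show (0 : ℝ) ≤ 3 by norm_num)]
  rw [ENNReal.tsum_mul_left, ENNReal.toReal_mul, ENNReal.toReal_ofReal (by norm_num)]
  ring
end
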